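/- Suppose ‖T_i‖ < 1/2 for all 1 ≤ i ≤ m and t(T_1,…,T_m) > d. Then for Lebesgue-almost every a = (a_1,…,a_m) ∈ ℝ^{md}, the self-affine set K^a has non-empty interior. -/

import Mathlib

open MeasureTheory

noncomputable section

namespace SelfAffine

variable {d m : ℕ}

/-- Euclidean operator norm of a `d × d` real matrix. -/
def opNorm (A : Matrix (Fin d) (Fin d) ℝ) : ℝ :=
  ‖Matrix.toEuclideanCLM (𝕜 := ℝ) A‖

/-- smallest singular value of an invertible matrix, via `α_d(A) = ‖A⁻¹‖⁻¹`. -/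
def alphaMin (A : Matrix (Fin d) (Fin d) ℝ) : ℝ := (opNorm A⁻¹)⁻¹

/-- `T_I = T_{i_1} ⋯ T_{i_n}` for a finite word `I ∈ Σ_n`. -/
def wordProd (T : Fin m → Matrix (Fin d) (Fin d) ℝ) {n : ℕ} (I : Fin n → Fin m) :
    Matrix (Fin d) (Fin d) ℝ :=
  (List.ofFn fun k => T (I k)).prod

/-- the coding map `π^a : Σ → ℝ^d`, `π^a(x) = ∑_{n ≥ 0} T_{x|n} a_{x_{n+1}}`. -/
def codingMap (T : Fin m → Matrix (Fin d) (Fin d) ℝ)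
    (a : Fin m → EuclideanSpace ℝ (Fin d)) (x : ℕ → Fin m) : EuclideanSpace ℝ (Fin d) :=
  ∑' n : ℕ, Matrix.toEuclideanCLM (𝕜 := ℝ) (wordProd T fun k : Fin n => x (k : ℕ)) (a (x n))

/-- the self-affine set `K^a = π^a(Σ)`. -/
def attractor (T : Fin m → Matrix (Fin d) (Fin d) ℝ)
    (a : Fin m → EuclideanSpace ℝ (Fin d)) : Set (EuclideanSpace ℝ (Fin d)) :=
  Set.range (codingMap T a)

/-- the quantity `t(T_1, …, T_m)`. -/
def tParam (T : Fin m → Matrix (Fin d) (Fin d) ℝ) : ℝ :=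
  sInf { t : ℝ | 0 ≤ t ∧ ∀ n : ℕ, 0 < n →
    ∑ I : Fin n → Fin m, alphaMin (wordProd T I) ^ t * |(wordProd T I).det| ≤ 1 }

open Real FourierTransform SchwartzMap ContDiff in
lemma integral_eq_of_charFun {E : Type*} [NormedAddCommGroup E] [InnerProductSpace ℝ E]
    [FiniteDimensional ℝ E] [MeasurableSpace E] [BorelSpace E]
    (ν : Measure E) [IsFiniteMeasure ν] (hIntg : Integrable (fun ξ => charFun ν ((2 * π) • ξ)))
    (f : 𝓢(E, ℂ)) :
    ∫ x, f x ∂ν = ∫ x, f x * 𝓕 (fun ξ => charFun ν ((2 * π) • ξ)) x := by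
  set F := fun ξ => charFun ν ((2 * π) • ξ) with hF
  have hFe : F = VectorFourier.fourierIntegral 𝐞 ν (-innerₗ E) (fun _ => (1 : ℂ)) := by
    ext ξ
    simp only [hF, charFun_apply, VectorFourier.fourierIntegral]
    congr with x
    simp [Real.fourierChar_apply, Circle.smul_def, inner_smul_right]
  have h1 := VectorFourier.integral_fourierIntegral_smul_eq_flip (μ := ν) (ν := volume)
    (L := -innerₗ E) (f := fun _ => (1 : ℂ)) (g := fun ξ => (𝓕 f) ξ)
    Real.continuous_fourierChar (by simp; fun_prop) (integrable_const _) (𝓕 f).integrable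
  have h2 := VectorFourier.integral_fourierIntegral_smul_eq_flip (μ := volume) (ν := volume)
    (L := innerₗ E) (f := fun x => f x) (g := F)
    Real.continuous_fourierChar (by simp; fun_prop) f.integrable hIntg
  rw [← hFe] at h1
  have h3 : ∀ x, VectorFourier.fourierIntegral 𝐞 volume (-innerₗ E).flip (fun ξ => (𝓕 f) ξ) x
      = f x := by
    intro x
    have h4 : (-innerₗ E).flip = -innerₗ E := by
      ext x y; simp [real_inner_comm]
    rw [h4]
    change (𝓕⁻ (fun ξ => (𝓕 f) ξ)) x = f x
    have := congrArg (fun g : 𝓢(E, ℂ) => g x) 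
      (show (𝓕⁻ (𝓕 f : 𝓢(E, ℂ)) : 𝓢(E, ℂ)) = f from FourierTransform.fourierInv_fourier_eq f)
    simp only [fourierInv_coe] at this
    exact this
  simp only [h3, smul_eq_mul, one_mul] at h1
  have h5 : (innerₗ E).flip = innerₗ E := flip_innerₗ E
  rw [h5] at h2
  simp only [smul_eq_mul] at h2
  rw [← h1]
  refine Eq.trans ?_ h2
  refine integral_congr_ae (.of_forall fun ξ => ?_)
  simp only [mul_comm (F ξ)]
  rfl

open Real FourierTransform SchwartzMap ContDiff in
lemma interior_nonempty_of_charFun {E : Type*} [NormedAddCommGroup E] [InnerProductSpace ℝ E]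
    [FiniteDimensional ℝ E] [MeasurableSpace E] [BorelSpace E]
    (ν : Measure E) [IsProbabilityMeasure ν] (hIntg : Integrable (charFun ν))
    (K : Set E) (hK : IsCompact K) (hν : ν Kᶜ = 0) : (interior K).Nonempty := by
  have hIntg' : Integrable (fun ξ => charFun ν ((2 * π) • ξ)) :=
    hIntg.comp_smul (by positivity)
  set g := 𝓕 (fun ξ => charFun ν ((2 * π) • ξ)) with hg
  have hgc : Continuous g :=
    VectorFourier.fourierIntegral_continuous Real.continuous_fourierChar
      (by simp; fun_prop) hIntg'
  have key : ∀ f : E → ℝ, ContDiff ℝ ∞ f → HasCompactSupport f →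
      ∫ x, f x • g x = ((∫ x, f x ∂ν : ℝ) : ℂ) := by
    intro f hf hfs
    have hg₁ : HasCompactSupport (Complex.ofRealCLM ∘ f) := hfs.comp_left rfl
    have hg₂ : ContDiff ℝ ∞ (Complex.ofRealCLM ∘ f) := by fun_prop
    have := integral_eq_of_charFun ν hIntg' (hg₁.toSchwartzMap hg₂)
    rw [← integral_complex_ofReal]
    simpa using this.symm
  by_contra hne
  rw [Set.not_nonempty_iff_eq_empty, interior_eq_empty_iff_dense_compl] at hne
  have hU : IsOpen Kᶜ := hK.isClosed.isOpen_compl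
  have hae : ∀ᵐ x, x ∈ Kᶜ → g x = 0 := by
    refine hU.ae_eq_zero_of_integral_contDiff_smul_eq_zero
      (hgc.locallyIntegrable.locallyIntegrableOn _) ?_
    intro f hf hfs hfU
    rw [key f hf hfs]
    rw [integral_eq_zero_of_ae]; · simp
    have : ∀ᵐ x ∂ν, x ∈ K := by rw [ae_iff]; exact hν
    filter_upwards [this] with x hx
    by_contra h
    exact hfU (subset_tsupport _ h) hx
  have hzero : ∀ x, g x = 0 := by
    by_contra! h
    have ho : IsOpen {x | g x ≠ 0} := isOpen_ne_fun hgc continuous_const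
    obtain ⟨y, hy1, hy2⟩ := hne.inter_open_nonempty _ ho h
    have hpos := (ho.inter hU).measure_pos (volume) ⟨y, hy1, hy2⟩
    refine hpos.ne' ?_
    rw [ae_iff] at hae
    refine measure_mono_null ?_ hae
    intro z hz
    simpa using ⟨hz.2, hz.1⟩
  obtain ⟨R, hR⟩ := hK.isBounded.subset_ball_lt 0 0
  let b : ContDiffBump (0 : E) := ⟨R, R + 1, hR.1, by linarith⟩
  have hb := key b b.contDiff b.hasCompactSupport
  simp only [hzero, smul_zero, integral_zero] at hb
  have : ∫ x, b x ∂ν = 1 := by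
    have : ∀ᵐ x ∂ν, b x = 1 := by
      have : ∀ᵐ x ∂ν, x ∈ K := by rw [ae_iff]; exact hν
      filter_upwards [this] with x hx
      exact b.one_of_mem_closedBall (Metric.ball_subset_closedBall (hR.2 hx))
    rw [integral_congr_ae this]; simp
  rw [this] at hb
  simp at hb

section Coding

set_option linter.unusedSectionVars false

variable {E : Type*} [NormedAddCommGroup E] [InnerProductSpace ℝ E] [FiniteDimensional ℝ E]
variable {ι : Type*}

/-- prefix products -/
def Q (A : ι → E →L[ℝ] E) (x : ℕ → ι) : ℕ → (E →L[ℝ] E)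
  | 0 => 1
  | (n + 1) => Q A x n * A (x n)

/-- coding map -/
def cod (A : ι → E →L[ℝ] E) (a : ι → E) (x : ℕ → ι) : E := ∑' n, Q A x n (a (x n))

lemma Q_congr (A : ι → E →L[ℝ] E) {x y : ℕ → ι} {n : ℕ} (h : ∀ k < n, x k = y k) :
    Q A x n = Q A y n := by
  induction n with
  | zero => rfl
  | succ n ih => simp only [Q]; rw [ih (fun k hk => h k (by omega)), h n (by omega)]

lemma Q_add (A : ι → E →L[ℝ] E) (x : ℕ → ι) (l k : ℕ) :
    Q A x (l + k) = Q A x l * Q A (fun j => x (l + j)) k := by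
  induction k with
  | zero => simp [Q]
  | succ k ih => rw [← add_assoc]; simp only [Q]; rw [ih, mul_assoc]

lemma norm_Q_le {A : ι → E →L[ℝ] E} {ρ : ℝ} (hA : ∀ i, ‖A i‖ ≤ ρ) (x : ℕ → ι)
    (n : ℕ) : ‖Q A x n‖ ≤ ρ ^ n := by
  induction n with
  | zero => rw [pow_zero]; exact ContinuousLinearMap.norm_id_le (𝕜 := ℝ) (E := E)
  | succ n ih =>
    have h0 : 0 ≤ ρ := (norm_nonneg _).trans (hA (x 0))
    simp only [Q, pow_succ]
    exact (norm_mul_le _ _).trans (mul_le_mul ih (hA _) (norm_nonneg _) (by positivity))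

lemma norm_term_le {A : ι → E →L[ℝ] E} {ρ : ℝ} (hA : ∀ i, ‖A i‖ ≤ ρ)
    {a : ι → E} {M : ℝ} (ha : ∀ i, ‖a i‖ ≤ M) (x : ℕ → ι) (n : ℕ) :
    ‖Q A x n (a (x n))‖ ≤ ρ ^ n * M := by
  have h0 : 0 ≤ ρ := (norm_nonneg _).trans (hA (x 0))
  exact (ContinuousLinearMap.le_opNorm _ _).trans
    (mul_le_mul (norm_Q_le hA x n) (ha _) (norm_nonneg _) (by positivity))

variable [Fintype ι]

lemma exists_bd (a : ι → E) : ∃ M, ∀ i, ‖a i‖ ≤ M := ⟨‖a‖, fun i => norm_le_pi_norm a i⟩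

lemma summable_cod {A : ι → E →L[ℝ] E} {ρ : ℝ} (hρ1 : ρ < 1)
    (hA : ∀ i, ‖A i‖ ≤ ρ) (a : ι → E) (x : ℕ → ι) :
    Summable fun n => Q A x n (a (x n)) := by
  have h0 : 0 ≤ ρ := (norm_nonneg _).trans (hA (x 0))
  obtain ⟨M, hM⟩ := exists_bd a
  exact Summable.of_norm_bounded ((summable_geometric_of_lt_one h0 hρ1).mul_right M)
    (norm_term_le hA hM x)

lemma cod_shift {A : ι → E →L[ℝ] E} {ρ : ℝ} (hρ1 : ρ < 1)
    (hA : ∀ i, ‖A i‖ ≤ ρ) (a : ι → E) (x : ℕ → ι) (l : ℕ) :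
    cod A a x = ∑ k ∈ Finset.range l, Q A x k (a (x k))
      + Q A x l (cod A a (fun j => x (l + j))) := by
  unfold cod
  rw [← (summable_cod hρ1 hA a x).sum_add_tsum_nat_add l,
    ContinuousLinearMap.map_tsum _ (summable_cod hρ1 hA a _)]
  congr 2
  ext1 k
  rw [add_comm k l, Q_add]
  rfl

lemma cod_sub {A : ι → E →L[ℝ] E} {ρ : ℝ} (hρ1 : ρ < 1)
    (hA : ∀ i, ‖A i‖ ≤ ρ) (a : ι → E) (x y : ℕ → ι) (l : ℕ) (h : ∀ k < l, x k = y k) :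
    cod A a x - cod A a y = Q A x l (cod A a (fun j => x (l + j)) - cod A a (fun j => y (l + j))) := by
  rw [cod_shift hρ1 hA a x l, cod_shift hρ1 hA a y l, map_sub, Q_congr A h]
  have : ∑ k ∈ Finset.range l, Q A x k (a (x k)) = ∑ k ∈ Finset.range l, Q A y k (a (y k)) := by
    refine Finset.sum_congr rfl fun k hk => ?_
    rw [Finset.mem_range] at hk
    rw [Q_congr A (fun j hj => h j (by omega)), h k hk]
  rw [this]; abel

/-- the coding map as a linear function of the translation vector -/
def codLin {A : ι → E →L[ℝ] E} {ρ : ℝ} (hρ1 : ρ < 1)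
    (hA : ∀ i, ‖A i‖ ≤ ρ) (x : ℕ → ι) : (ι → E) →ₗ[ℝ] E where
  toFun a := cod A a x
  map_add' a b := by
    simp only [cod, Pi.add_apply, map_add]
    exact (summable_cod hρ1 hA a x).tsum_add (summable_cod hρ1 hA b x)
  map_smul' c a := by
    simp only [cod, Pi.smul_apply, map_smul, RingHom.id_apply]
    exact (summable_cod hρ1 hA a x).tsum_const_smul c

lemma norm_cod_sub_head {A : ι → E →L[ℝ] E} {ρ : ℝ} (hρ1 : ρ < 1)
    (hA : ∀ i, ‖A i‖ ≤ ρ) {a : ι → E} {M : ℝ} (ha : ∀ i, ‖a i‖ ≤ M) (x : ℕ → ι) :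
    ‖cod A a x - a (x 0)‖ ≤ ρ / (1 - ρ) * M := by
  have h0 : 0 ≤ ρ := (norm_nonneg _).trans (hA (x 0))
  have h1 := (summable_cod hρ1 hA a x).sum_add_tsum_nat_add 1
  have : cod A a x - a (x 0) = ∑' n, Q A x (n + 1) (a (x (n + 1))) := by
    rw [cod, ← h1]; simp [Q]
  rw [this]
  have hs := ((hasSum_geometric_of_lt_one h0 hρ1).mul_left ρ).mul_right M
  rw [← div_eq_mul_inv] at hs
  refine tsum_of_norm_bounded hs fun n => ?_
  refine (norm_term_le hA ha x (n + 1)).trans (le_of_eq ?_)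
  ring

/-- coordinates of the linear functional `a ↦ ⟨π^a x - π^a y, ξ⟩` -/
lemma exists_eta [DecidableEq ι] {A : ι → E →L[ℝ] E} {ρ : ℝ} (hρ : ρ < 1 / 2)
    (hA : ∀ i, ‖A i‖ ≤ ρ) (x y : ℕ → ι) (l : ℕ) (h : ∀ k < l, x k = y k) (hl : x l ≠ y l) (ξ : E) :
    ∃ η : ι → E, (∀ a, inner ℝ (cod A a x - cod A a y) ξ = ∑ i, inner ℝ (η i) (a i)) ∧
      (2 - 2 * (ρ / (1 - ρ))) ^ 2 / 2 * ‖star (Q A x l) ξ‖ ^ 2 ≤ ∑ i, ‖η i‖ ^ 2 := by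
  have hρ1 : ρ < 1 := by linarith
  have h0 : 0 ≤ ρ := (norm_nonneg _).trans (hA (x 0))
  let Λ : (ι → E) →ₗ[ℝ] ℝ := ((innerSL ℝ ξ : E →L[ℝ] ℝ) : E →ₗ[ℝ] ℝ) ∘ₗ
    (codLin hρ1 hA x - codLin hρ1 hA y)
  have hΛ : ∀ a, Λ a = inner ℝ (cod A a x - cod A a y) ξ := fun a => by
    simp only [Λ, LinearMap.comp_apply]
    rw [real_inner_comm]; rfl
  let η : ι → E := fun i => (InnerProductSpace.toDual ℝ E).symm
    (LinearMap.toContinuousLinearMap (Λ ∘ₗ LinearMap.single ℝ (fun _ => E) i))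
  have hη : ∀ i v, inner ℝ (η i) v = Λ (Pi.single i v) := fun i v => by
    simp [η, InnerProductSpace.toDual_symm_apply]
  refine ⟨η, fun a => ?_, ?_⟩
  · rw [← hΛ]
    conv_lhs => rw [← Finset.univ_sum_single a]
    rw [map_sum]
    simp [hη]
  set ζ := star (Q A x l) ξ with hζ
  set κ := 2 - 2 * (ρ / (1 - ρ)) with hκ
  have hκ0 : 0 ≤ κ := by
    have : ρ / (1 - ρ) ≤ 1 := by rw [div_le_one (by linarith)]; linarith
    linarith
  set b : ι → E := Pi.single (x l) ζ - Pi.single (y l) ζ with hb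
  have hbx : b (x l) = ζ := by simp [hb, hl]
  have hby : b (y l) = -ζ := by simp [hb, hl.symm]
  have hbn : ∀ i, ‖b i‖ ≤ ‖ζ‖ := by
    intro i
    by_cases h1 : i = x l
    · rw [h1, hbx]
    by_cases h2 : i = y l
    · rw [h2, hby, norm_neg]
    simp [hb, h1, h2]
  have hx' := norm_cod_sub_head hρ1 hA hbn (fun j => x (l + j))
  have hy' := norm_cod_sub_head hρ1 hA hbn (fun j => y (l + j))
  simp only [add_zero, hbx, hby] at hx' hy'
  set u := cod A b (fun j => x (l + j))
  set v := cod A b (fun j => y (l + j))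
  have e1 : inner ℝ (η (x l) - η (y l)) ζ = inner ℝ (u - v) ζ := by
    rw [inner_sub_left, hη, hη, ← map_sub, hΛ, cod_sub hρ1 hA _ x y l h, hζ,
      ContinuousLinearMap.star_eq_adjoint, ContinuousLinearMap.adjoint_inner_right]
    rfl
  have e2 : κ * ‖ζ‖ ^ 2 ≤ inner ℝ (u - v) ζ := by
    have : u - v = (2 : ℝ) • ζ + ((u - ζ) - (v - -ζ)) := by rw [two_smul]; abel
    rw [this, inner_add_left, inner_smul_left, real_inner_self_eq_norm_sq]
    have h3 : |inner ℝ ((u - ζ) - (v - -ζ)) ζ| ≤ (2 * (ρ / (1 - ρ)) * ‖ζ‖) * ‖ζ‖ := by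
      refine (abs_real_inner_le_norm _ _).trans ?_
      gcongr
      refine (norm_sub_le _ _).trans ?_
      linarith
    have h4 := (abs_le.mp h3).1
    simp only [conj_trivial]
    rw [hκ]; nlinarith
  have e3 : κ * ‖ζ‖ ≤ ‖η (x l) - η (y l)‖ := by
    have := (e2.trans (e1.symm.le)).trans (real_inner_le_norm _ _)
    rcases eq_or_lt_of_le (norm_nonneg ζ) with h5 | h5
    · rw [← h5]; simp
    · refine le_of_mul_le_mul_right ?_ h5
      calc _ = κ * ‖ζ‖ ^ 2 := by ring
        _ ≤ _ := this
  have e4 : ‖η (x l)‖ ^ 2 + ‖η (y l)‖ ^ 2 ≤ ∑ i, ‖η i‖ ^ 2 := by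
    rw [← Finset.sum_pair (f := fun i => ‖η i‖ ^ 2) hl]
    exact Finset.sum_le_sum_of_subset_of_nonneg (Finset.subset_univ _)
      (fun i _ _ => by positivity)
  have e5 := norm_sub_le (η (x l)) (η (y l))
  have e6 : 0 ≤ κ * ‖ζ‖ := by positivity
  have e7 : (κ * ‖ζ‖) ^ 2 ≤ (‖η (x l)‖ + ‖η (y l)‖) ^ 2 := by
    gcongr; linarith
  nlinarith [sq_nonneg (‖η (x l)‖ - ‖η (y l)‖)]

/-- Gaussian weight -/
def G (a : ι → E) : ℝ := ∏ i, Real.exp (-Real.pi * ‖a i‖ ^ 2)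

variable [MeasurableSpace E] [BorelSpace E]

lemma integral_G_char (η : ι → E) :
    ∫ a : ι → E, (G a : ℂ) * Complex.exp ((∑ i, inner ℝ (η i) (a i) : ℝ) * Complex.I)
      = (Real.exp (-(∑ i, ‖η i‖ ^ 2) / (4 * Real.pi)) : ℂ) := by
  have h1 : ∀ a : ι → E, (G a : ℂ) * Complex.exp ((∑ i, inner ℝ (η i) (a i) : ℝ) * Complex.I)
      = ∏ i, Complex.exp (-(Real.pi : ℂ) * ‖a i‖ ^ 2 + Complex.I * inner ℝ (η i) (a i)) := by
    intro a
    simp only [G, Complex.ofReal_prod, Complex.ofReal_sum, Finset.sum_mul, Complex.exp_sum]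
    rw [← Finset.prod_mul_distrib]
    refine Finset.prod_congr rfl fun i _ => ?_
    rw [Complex.exp_add]
    push_cast
    rw [mul_comm (Complex.I)]
  simp only [h1]
  rw [integral_fintype_prod_volume_eq_prod (fun i (v : E) =>
    Complex.exp (-(Real.pi : ℂ) * ‖v‖ ^ 2 + Complex.I * inner ℝ (η i) v))]
  have h2 : ∀ i, ∫ v : E, Complex.exp (-(Real.pi : ℂ) * ‖v‖ ^ 2 + Complex.I * inner ℝ (η i) v)
      = Complex.exp (-(‖η i‖ : ℂ) ^ 2 / (4 * Real.pi)) := by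
    intro i
    rw [GaussianFourier.integral_cexp_neg_mul_sq_norm_add (by simpa using Real.pi_pos)]
    rw [div_self (by exact_mod_cast Real.pi_ne_zero), Complex.one_cpow, one_mul]
    simp
  simp only [h2]
  rw [← Complex.exp_sum]
  push_cast
  rw [← Finset.sum_div, Finset.sum_neg_distrib]

lemma G_pos (a : ι → E) : 0 < G a := Finset.prod_pos fun _ _ => Real.exp_pos _

lemma continuous_G : Continuous (G : (ι → E) → ℝ) := by
  unfold G; fun_prop

lemma integrable_G : Integrable (G : (ι → E) → ℝ) := by
  by_contra h
  have h1 := integral_G_char (0 : ι → E)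
  simp only [Pi.zero_apply, inner_zero_left, Finset.sum_const_zero, Complex.ofReal_zero, zero_mul,
    Complex.exp_zero, mul_one, norm_zero] at h1
  rw [integral_complex_ofReal, integral_undef h] at h1
  simp at h1

lemma integral_G : ∫ a : ι → E, G a = 1 := by
  have h1 := integral_G_char (0 : ι → E)
  simp only [Pi.zero_apply, inner_zero_left, Finset.sum_const_zero, Complex.ofReal_zero, zero_mul,
    Complex.exp_zero, mul_one, norm_zero] at h1
  rw [integral_complex_ofReal] at h1
  simp at h1
  exact_mod_cast h1

lemma gauss_le_one (A : ι → E →L[ℝ] E) (x y : ℕ → ι) (ξ : E) :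
    ‖∫ a : ι → E, (G a : ℂ) * Complex.exp (inner ℝ (cod A a x - cod A a y) ξ * Complex.I)‖ ≤ 1 := by
  refine (norm_integral_le_integral_norm _).trans ?_
  rw [← integral_G (ι := ι) (E := E)]
  refine le_of_eq (integral_congr_ae (.of_forall fun a => ?_))
  simp [Complex.norm_exp_ofReal_mul_I, abs_of_pos (G_pos a)]

lemma gauss_bound [DecidableEq ι] {A : ι → E →L[ℝ] E} {ρ : ℝ} (hρ : ρ < 1 / 2)
    (hA : ∀ i, ‖A i‖ ≤ ρ) (x y : ℕ → ι) (l : ℕ) (h : ∀ k < l, x k = y k) (hl : x l ≠ y l) (ξ : E) :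
    ‖∫ a : ι → E, (G a : ℂ) * Complex.exp (inner ℝ (cod A a x - cod A a y) ξ * Complex.I)‖ ≤
      Real.exp (-((2 - 2 * (ρ / (1 - ρ))) ^ 2 / 2 / (4 * Real.pi)) * ‖star (Q A x l) ξ‖ ^ 2) := by
  obtain ⟨η, h1, h2⟩ := exists_eta hρ hA x y l h hl ξ
  simp only [h1]
  rw [integral_G_char, Complex.norm_real, Real.norm_of_nonneg (Real.exp_pos _).le]
  apply Real.exp_le_exp.mpr
  rw [neg_div, neg_mul, neg_le_neg_iff, div_mul_eq_mul_div]
  gcongr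

end Coding

section Blocks
set_option linter.unusedSectionVars false

variable {E : Type*} [NormedAddCommGroup E] [InnerProductSpace ℝ E] [FiniteDimensional ℝ E]
variable {ι : Type*}

lemma Q_eq_ofFn (A : ι → E →L[ℝ] E) (x : ℕ → ι) (n : ℕ) :
    Q A x n = (List.ofFn fun k : Fin n => A (x k)).prod := by
  induction n with
  | zero => simp [Q]
  | succ n ih =>
    rw [List.ofFn_succ']
    simp [Q, ih]

/-- concatenation of blocks -/
def concat {n : ℕ} (hn : 0 < n) (ω : ℕ → (Fin n → ι)) : ℕ → ι :=
  fun k => ω (k / n) ⟨k % n, Nat.mod_lt _ hn⟩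

/-- matrix product of a block -/
def blockS (A : ι → E →L[ℝ] E) {n : ℕ} (I : Fin n → ι) : E →L[ℝ] E :=
  (List.ofFn fun k => A (I k)).prod

lemma concat_apply {n : ℕ} (hn : 0 < n) (ω : ℕ → (Fin n → ι)) (k : ℕ) (j : Fin n) :
    concat hn ω (n * k + j) = ω k j := by
  unfold concat
  have h1 : (n * k + j) / n = k := by
    rw [Nat.mul_add_div hn, Nat.div_eq_of_lt j.2, add_zero]
  have h2 : (n * k + j) % n = j := by
    rw [Nat.mul_add_mod, Nat.mod_eq_of_lt j.2]
  simp only [h2]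
  rw [h1]

lemma Q_concat (A : ι → E →L[ℝ] E) {n : ℕ} (hn : 0 < n) (ω : ℕ → (Fin n → ι)) (k : ℕ) :
    Q A (concat hn ω) (n * k) = Q (blockS A) ω k := by
  induction k with
  | zero => rfl
  | succ k ih =>
    rw [Nat.mul_succ, Q_add, ih, Q_eq_ofFn A _ n]
    simp only [concat_apply]
    rfl

lemma blocks_agree {n : ℕ} (hn : 0 < n) (ω ω' : ℕ → (Fin n → ι)) (k : ℕ)
    (h : ∀ i < n * k, concat hn ω i = concat hn ω' i) : ∀ j < k, ω j = ω' j := by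
  intro j hj
  ext1 r
  rw [← concat_apply hn ω j r, ← concat_apply hn ω' j r]
  apply h
  calc n * j + r < n * j + n := by have := r.2; omega
    _ = n * (j + 1) := by ring
    _ ≤ n * k := Nat.mul_le_mul_left _ hj

variable [Fintype ι]

lemma exists_lower (A : ι → E →L[ℝ] E) (hU : ∀ i, IsUnit (A i)) (n : ℕ) :
    ∃ δ > 0, ∀ (x : ℕ → ι) (r : ℕ), r ≤ n → ∀ η, δ * ‖η‖ ≤ ‖star (Q A x r) η‖ := by
  induction n with
  | zero =>
    refine ⟨1, one_pos, fun x r hr η => ?_⟩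
    obtain rfl : r = 0 := by omega
    simp [Q]
  | succ n ih =>
    obtain ⟨δ, hδ, h⟩ := ih
    have h1 : ∃ ε > 0, ∀ i η, ε * ‖η‖ ≤ ‖star (A i) η‖ := by
      have h2 : ∀ i, ∃ C : ℝ, 0 < C ∧ ∀ η, ‖η‖ ≤ C * ‖star (A i) η‖ := by
        intro i
        obtain ⟨B, hB⟩ := (hU i).star.exists_left_inv
        refine ⟨‖B‖ + 1, by positivity, fun η => ?_⟩
        calc ‖η‖ = ‖(B * star (A i)) η‖ := by rw [hB]; rfl
          _ = ‖B (star (A i) η)‖ := rfl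
          _ ≤ ‖B‖ * ‖star (A i) η‖ := B.le_opNorm _
          _ ≤ _ := by gcongr; linarith
      choose C hC0 hC using h2
      have hS : 0 ≤ ∑ i, C i := Finset.sum_nonneg fun i _ => (hC0 i).le
      refine ⟨(1 + ∑ i, C i)⁻¹, by positivity, fun i η => ?_⟩
      rw [inv_mul_le_iff₀ (by positivity)]
      refine (hC i η).trans ?_
      gcongr
      have := Finset.single_le_sum (f := C) (fun i _ => (hC0 i).le) (Finset.mem_univ i)
      linarith
    obtain ⟨ε, hε, h2⟩ := h1
    refine ⟨min δ (δ * ε), by positivity, fun x r hr η => ?_⟩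
    rcases Nat.lt_or_ge n r with h3 | h3
    · obtain rfl : r = n + 1 := by omega
      simp only [Q, star_mul]
      calc min δ (δ * ε) * ‖η‖ ≤ (δ * ε) * ‖η‖ := by gcongr; exact min_le_right _ _
        _ = ε * (δ * ‖η‖) := by ring
        _ ≤ ε * ‖star (Q A x n) η‖ := by gcongr; exact h x n le_rfl η
        _ ≤ _ := h2 _ _
    · calc min δ (δ * ε) * ‖η‖ ≤ δ * ‖η‖ := by gcongr; exact min_le_left _ _
        _ ≤ _ := h x r h3 η

variable [MeasurableSpace E] [BorelSpace E]

lemma block_bound {A : ι → E →L[ℝ] E} (hU : ∀ i, IsUnit (A i)) {ρ : ℝ} (hρ : ρ < 1 / 2)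
    (hρ0 : 0 ≤ ρ)
    (hA : ∀ i, ‖A i‖ ≤ ρ) {n : ℕ} (hn : 0 < n) :
    ∃ c > 0, ∀ (ω ω' : ℕ → (Fin n → ι)) (ξ : E), ∃ k, (∀ j < k, ω j = ω' j) ∧
      ‖∫ a : ι → E, (G a : ℂ) *
        Complex.exp (inner ℝ (cod A a (concat hn ω) - cod A a (concat hn ω')) ξ * Complex.I)‖ ≤
      Real.exp 1 * Real.exp (-c * ‖star (Q (blockS A) ω k) ξ‖ ^ 2) := by
  classical
  obtain ⟨δ, hδ, hlow⟩ := exists_lower A hU n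
  set κ := (2 - 2 * (ρ / (1 - ρ))) ^ 2 / 2 / (4 * Real.pi) with hκ
  have hκ0 : 0 < κ := by
    have : ρ / (1 - ρ) < 1 := by rw [div_lt_one (by linarith)]; linarith
    have : 0 < 2 - 2 * (ρ / (1 - ρ)) := by linarith
    have := Real.pi_pos
    positivity
  refine ⟨κ * δ ^ 2, by positivity, fun ω ω' ξ => ?_⟩
  by_cases hxy : ∃ l, concat hn ω l ≠ concat hn ω' l
  · set l := Nat.find hxy with hl
    have hl1 : concat hn ω l ≠ concat hn ω' l := Nat.find_spec hxy
    have hl2 : ∀ i < l, concat hn ω i = concat hn ω' i := fun i hi => by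
      simpa using Nat.find_min hxy hi
    have hdm := Nat.div_add_mod l n
    have hr := Nat.mod_lt l hn
    refine ⟨l / n, blocks_agree hn ω ω' _ fun i hi => hl2 i (by omega), ?_⟩
    refine (gauss_bound hρ hA _ _ l hl2 hl1 ξ).trans ?_
    rw [← hκ, ← Q_concat A hn]
    have h1 : δ * ‖star (Q A (concat hn ω) (n * (l / n))) ξ‖ ≤ ‖star (Q A (concat hn ω) l) ξ‖ := by
      conv_rhs => rw [← hdm, Q_add, star_mul]
      exact hlow _ _ hr.le _
    have h2 : Real.exp (-κ * ‖star (Q A (concat hn ω) l) ξ‖ ^ 2) ≤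
        Real.exp (-(κ * δ ^ 2) * ‖star (Q A (concat hn ω) (n * (l / n))) ξ‖ ^ 2) := by
      apply Real.exp_le_exp.mpr
      have := pow_le_pow_left₀ (by positivity) h1 2
      nlinarith
    refine h2.trans (le_mul_of_one_le_left (Real.exp_pos _).le (Real.one_le_exp zero_le_one))
  · push Not at hxy
    have ht : Filter.Tendsto (fun k : ℕ => (κ * δ ^ 2) * (ρ ^ (n * k) * ‖ξ‖) ^ 2) Filter.atTop
        (nhds ((κ * δ ^ 2) * (0 * ‖ξ‖) ^ 2)) := by
      refine ((Filter.Tendsto.mul_const _ ?_).pow 2).const_mul _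
      exact (tendsto_pow_atTop_nhds_zero_of_lt_one hρ0 (by linarith)).comp
        (Filter.tendsto_id.const_mul_atTop' hn)
    obtain ⟨k, hk⟩ := (ht.eventually_lt_const (u := 1) (by norm_num)).exists
    refine ⟨k, blocks_agree hn ω ω' _ fun i hi => hxy i, ?_⟩
    refine (gauss_le_one A _ _ ξ).trans ?_
    rw [← Real.exp_add]
    apply Real.one_le_exp
    rw [← Q_concat A hn]
    have h1 : ‖star (Q A (concat hn ω) (n * k)) ξ‖ ≤ ρ ^ (n * k) * ‖ξ‖ := by
      refine (ContinuousLinearMap.le_opNorm _ _).trans ?_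
      rw [ContinuousLinearMap.star_eq_adjoint, LinearIsometryEquiv.norm_map]
      gcongr
      exact norm_Q_le hA _ _
    have h2 : (κ * δ ^ 2) * ‖star (Q A (concat hn ω) (n * k)) ξ‖ ^ 2 ≤
      (κ * δ ^ 2) * (ρ ^ (n * k) * ‖ξ‖) ^ 2 := by gcongr
    linarith

end Blocks

section Energy
open scoped ENNReal
set_option linter.unusedSectionVars false

variable {E : Type*} [NormedAddCommGroup E] [InnerProductSpace ℝ E] [FiniteDimensional ℝ E]
variable [MeasurableSpace E] [BorelSpace E]

lemma weight_fin {c : ℝ} (hc : 0 < c) (s : ℝ) :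
    ∫⁻ η : E, ENNReal.ofReal ((1 + ‖η‖) ^ s * Real.exp (-c * ‖η‖ ^ 2)) < ∞ := by
  set D : ℝ := Module.finrank ℝ E + 1 with hD
  obtain ⟨n, hn⟩ := exists_nat_ge (s + D)
  set C : ℝ := n.factorial * Real.exp (1 + 1 / (4 * c)) with hC
  have hb : ∀ t : ℝ, 0 ≤ t → (1 + t) ^ s * Real.exp (-c * t ^ 2) ≤ C * (1 + t) ^ (-D) := by
    intro t ht
    have h1 : (1 + t) ^ (s + D) ≤ (1 + t) ^ n := by
      rw [← Real.rpow_natCast]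
      exact Real.rpow_le_rpow_of_exponent_le (by linarith) hn
    have h2 := Real.pow_div_factorial_le_exp (x := 1 + t) (by linarith) n
    rw [div_le_iff₀ (by positivity)] at h2
    have h3 : 1 + t ≤ (1 + 1 / (4 * c)) + c * t ^ 2 := by
      have : 1 / (4 * c) + c * t ^ 2 - t = c * (t - 1 / (2 * c)) ^ 2 := by field_simp; ring
      have : 0 ≤ c * (t - 1 / (2 * c)) ^ 2 := by positivity
      linarith
    have h4 : (1 + t) ^ (s + D) ≤ C * Real.exp (c * t ^ 2) := by
      calc _ ≤ _ := h1
        _ ≤ _ := h2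
        _ ≤ Real.exp ((1 + 1 / (4 * c)) + c * t ^ 2) * n.factorial := by gcongr
        _ = _ := by rw [Real.exp_add, hC]; ring
    have h5 : (1 + t) ^ s = (1 + t) ^ (s + D) * (1 + t) ^ (-D) := by
      rw [← Real.rpow_add (by linarith)]; congr 1; ring
    rw [h5]
    calc (1 + t) ^ (s + D) * (1 + t) ^ (-D) * Real.exp (-c * t ^ 2)
        ≤ C * Real.exp (c * t ^ 2) * (1 + t) ^ (-D) * Real.exp (-c * t ^ 2) := by gcongr
      _ = C * (1 + t) ^ (-D) * (Real.exp (c * t ^ 2) * Real.exp (-c * t ^ 2)) := by ring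
      _ = _ := by rw [← Real.exp_add]; simp
  have hi : Integrable (fun η : E => C * (1 + ‖η‖) ^ (-D)) :=
    (integrable_one_add_norm (by rw [hD]; linarith)).const_mul C
  refine lt_of_le_of_lt (lintegral_mono fun η => ENNReal.ofReal_le_ofReal (hb _ (norm_nonneg _))) ?_
  exact hi.lintegral_lt_top

lemma weight_bound {c s : ℝ} (hs : 0 ≤ s) (B : E →L[ℝ] E)
    (hB : LinearMap.det (B : E →ₗ[ℝ] E) ≠ 0) {r : ℝ} (hr : 1 ≤ r)
    (h : ∀ ξ, ‖ξ‖ ≤ r * ‖B ξ‖) :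
    ∫⁻ ξ : E, ENNReal.ofReal ((1 + ‖ξ‖) ^ s) * ENNReal.ofReal (Real.exp (-c * ‖B ξ‖ ^ 2)) ≤
      ENNReal.ofReal (r ^ s * |LinearMap.det (B : E →ₗ[ℝ] E)|⁻¹) *
      ∫⁻ η : E, ENNReal.ofReal ((1 + ‖η‖) ^ s * Real.exp (-c * ‖η‖ ^ 2)) := by
  set f : E → ℝ≥0∞ := fun η => ENNReal.ofReal ((1 + ‖η‖) ^ s * Real.exp (-c * ‖η‖ ^ 2)) with hf
  have hfm : Measurable f := by
    rw [hf]; fun_prop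
  have h1 : ∫⁻ ξ, f (B ξ) = ENNReal.ofReal |LinearMap.det (B : E →ₗ[ℝ] E)|⁻¹ * ∫⁻ η, f η := by
    have := Measure.map_linearMap_addHaar_eq_smul_addHaar (volume : Measure E) hB
    rw [← lintegral_map hfm B.measurable]
    change ∫⁻ y, f y ∂(Measure.map (B : E →ₗ[ℝ] E) volume) = _
    rw [this, lintegral_smul_measure, abs_inv, smul_eq_mul]
  rw [ENNReal.ofReal_mul (by positivity), mul_assoc, ← h1, ← lintegral_const_mul]
  swap
  · exact hfm.comp B.measurable
  refine lintegral_mono fun ξ => ?_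
  rw [hf]
  simp only
  rw [← ENNReal.ofReal_mul (by positivity), ← ENNReal.ofReal_mul (by positivity), ← mul_assoc,
    ← Real.mul_rpow (by positivity) (by positivity)]
  apply ENNReal.ofReal_le_ofReal
  gcongr
  nlinarith [h ξ]

variable {N : Type*}

lemma prod_lower (S : N → E →L[ℝ] E) (r : N → ℝ) (hr : ∀ I, 1 ≤ r I)
    (h : ∀ I ξ, ‖ξ‖ ≤ r I * ‖star (S I) ξ‖) (ω : ℕ → N) (k : ℕ) (ξ : E) :
    ‖ξ‖ ≤ (∏ j : Fin k, r (ω j)) * ‖star (Q S ω k) ξ‖ := by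
  induction k with
  | zero => simp [Q]
  | succ k ih =>
    rw [Fin.prod_univ_castSucc]
    simp only [Q, star_mul, Fin.val_castSucc, Fin.val_last]
    have h0 : 0 ≤ ∏ j : Fin k, r (ω j) := Finset.prod_nonneg fun j _ => zero_le_one.trans (hr _)
    calc ‖ξ‖ ≤ _ := ih
      _ ≤ (∏ j : Fin k, r (ω j)) * (r (ω k) * ‖star (S (ω k)) (star (Q S ω k) ξ)‖) := by
          gcongr; exact h _ _
      _ = _ := by rw [mul_assoc]; rfl

lemma prod_det (S : N → E →L[ℝ] E) (ω : ℕ → N) (k : ℕ) :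
    LinearMap.det (star (Q S ω k) : E →L[ℝ] E).toLinearMap =
      ∏ j : Fin k, LinearMap.det (star (S (ω j)) : E →L[ℝ] E).toLinearMap := by
  induction k with
  | zero => simp [Q]
  | succ k ih =>
    rw [Fin.prod_univ_castSucc]
    simp only [Q, star_mul, Fin.val_castSucc, Fin.val_last]
    rw [← ih, mul_comm, ← map_mul]
    rfl

variable [Fintype N] [Nonempty N] [MeasurableSpace N] [MeasurableSingletonClass N]

/-- extension of a finite word -/
def extend {k : ℕ} (J : Fin k → N) : ℕ → N :=
  fun j => if h : j < k then J ⟨j, h⟩ else Classical.arbitrary N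

/-- cylinder set -/
def cyl {k : ℕ} (J : Fin k → N) : Set (ℕ → N) := {ω | ∀ j : Fin k, ω j = J j}

lemma cyl_eq {k : ℕ} (J : Fin k → N) :
    cyl J = Set.pi (Finset.range k : Finset ℕ) (fun j => {extend J j}) := by
  ext ω
  simp only [cyl, Set.mem_ofPred_eq, Set.mem_pi, Finset.coe_range, Set.mem_Iio,
    Set.mem_singleton_iff, extend]
  constructor
  · intro h j hj
    rw [dif_pos hj]; exact h ⟨j, hj⟩
  · intro h j
    have := h j j.2
    rwa [dif_pos j.2] at this

lemma measurableSet_cyl {k : ℕ} (J : Fin k → N) : MeasurableSet (cyl J) := by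
  rw [cyl_eq]
  exact MeasurableSet.pi (Finset.countable_toSet _) fun j _ => measurableSet_singleton _

lemma measure_cyl (P : Measure N) [IsProbabilityMeasure P] {k : ℕ} (J : Fin k → N) :
    Measure.infinitePi (fun _ : ℕ => P) (cyl J) = ∏ j, P {J j} := by
  rw [cyl_eq, Measure.infinitePi_pi _ fun j _ => measurableSet_singleton _, Finset.prod_range]
  refine Finset.prod_congr rfl fun j _ => ?_
  simp [extend]

/-- upper bound for the kernel -/
def kerB (S : N → E →L[ℝ] E) (c : ℝ) (ξ : E) (q : (ℕ → N) × (ℕ → N)) : ℝ≥0∞ :=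
  ∑' k : ℕ, ∑ J : Fin k → N, (cyl J ×ˢ cyl J).indicator (fun _ =>
    ENNReal.ofReal (Real.exp (-c * ‖star (Q S (extend J) k) ξ‖ ^ 2))) q

lemma le_kerB (S : N → E →L[ℝ] E) (c : ℝ) (ξ : E) (ω ω' : ℕ → N) (k : ℕ)
    (h : ∀ j < k, ω j = ω' j) :
    ENNReal.ofReal (Real.exp (-c * ‖star (Q S ω k) ξ‖ ^ 2)) ≤ kerB S c ξ (ω, ω') := by
  unfold kerB
  refine le_trans ?_ (ENNReal.le_tsum k)
  refine le_trans ?_ (Finset.single_le_sum (fun _ _ => zero_le)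
    (Finset.mem_univ (fun j : Fin k => ω j)))
  rw [Set.indicator_of_mem]
  · rw [Q_congr S (y := extend (fun j : Fin k => ω j))]
    intro j hj
    simp [extend, hj]
  · exact ⟨fun j => rfl, fun j => (h j j.2).symm⟩

lemma lintegral_kerB (S : N → E →L[ℝ] E) (c : ℝ) (ξ : E) (P : Measure N) [IsProbabilityMeasure P] :
    ∫⁻ q, kerB S c ξ q ∂((Measure.infinitePi (fun _ : ℕ => P)).prod
      (Measure.infinitePi (fun _ : ℕ => P))) =
    ∑' k : ℕ, ∑ J : Fin k → N, (∏ j, P {J j} ^ 2) *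
      ENNReal.ofReal (Real.exp (-c * ‖star (Q S (extend J) k) ξ‖ ^ 2)) := by
  unfold kerB
  have hm : ∀ (k : ℕ) (J : Fin k → N), MeasurableSet (cyl J ×ˢ cyl J) := fun k J =>
    (measurableSet_cyl J).prod (measurableSet_cyl J)
  rw [lintegral_tsum]
  · congr 1; ext1 k
    rw [lintegral_finsetSum]
    · refine Finset.sum_congr rfl fun J _ => ?_
      rw [lintegral_indicator_const (hm k J), Measure.prod_prod, measure_cyl, mul_comm, ← sq,
        Finset.prod_pow]
    · intro J _
      exact measurable_const.indicator (hm k J)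
  · intro k
    exact (Finset.measurable_fun_sum _ fun J _ => measurable_const.indicator (hm k J)).aemeasurable

lemma energy_fin (S : N → E →L[ℝ] E) {c s : ℝ} (hc : 0 < c) (hs : 0 ≤ s) (P : Measure N)
    [IsProbabilityMeasure P] (r : N → ℝ) (hr : ∀ I, 1 ≤ r I)
    (h : ∀ I ξ, ‖ξ‖ ≤ r I * ‖star (S I) ξ‖)
    (hdet : ∀ I, LinearMap.det (star (S I) : E →L[ℝ] E).toLinearMap ≠ 0)
    (hlt : ∑ I, P {I} ^ 2 * ENNReal.ofReal
      (r I ^ s * |LinearMap.det (star (S I) : E →L[ℝ] E).toLinearMap|⁻¹) < 1) :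
    ∫⁻ ξ : E, ENNReal.ofReal ((1 + ‖ξ‖) ^ s) * ∫⁻ q, kerB S c ξ q
      ∂((Measure.infinitePi (fun _ : ℕ => P)).prod (Measure.infinitePi (fun _ : ℕ => P))) < ∞ := by
  simp only [lintegral_kerB, ← ENNReal.tsum_mul_left, Finset.mul_sum]
  rw [lintegral_tsum]
  swap
  · intro k; fun_prop
  set C := ∫⁻ η : E, ENNReal.ofReal ((1 + ‖η‖) ^ s * Real.exp (-c * ‖η‖ ^ 2)) with hC
  have hCfin : C < ∞ := weight_fin hc s
  set θ := ∑ I, P {I} ^ 2 * ENNReal.ofReal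
      (r I ^ s * |LinearMap.det (star (S I) : E →L[ℝ] E).toLinearMap|⁻¹) with hθ
  have hk : ∀ k : ℕ, ∫⁻ ξ : E, ∑ J : Fin k → N, ENNReal.ofReal ((1 + ‖ξ‖) ^ s) *
      ((∏ j, P {J j} ^ 2) * ENNReal.ofReal (Real.exp (-c * ‖star (Q S (extend J) k) ξ‖ ^ 2)))
      ≤ θ ^ k * C := by
    intro k
    rw [lintegral_finsetSum _ (by intro J _; fun_prop)]
    have hpow : θ ^ k = ∑ J : Fin k → N, ∏ j, (P {J j} ^ 2 * ENNReal.ofReal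
      (r (J j) ^ s * |LinearMap.det (star (S (J j)) : E →L[ℝ] E).toLinearMap|⁻¹)) := by
      rw [hθ, ← Fin.prod_const, Finset.prod_univ_sum]
      simp
    rw [hpow, Finset.sum_mul]
    refine Finset.sum_le_sum fun J _ => ?_
    have he : ∀ j : Fin k, extend J j = J j := fun j => by simp [extend]
    have hl := prod_lower S r hr h (extend J) k
    have hd := prod_det S (extend J) k
    simp only [he] at hl hd
    have hw := weight_bound (c := c) hs (star (Q S (extend J) k)) (by
      rw [hd]; exact Finset.prod_ne_zero_iff.mpr fun j _ => hdet _)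
      (r := ∏ j : Fin k, r (J j)) (Finset.prod_induction _ (fun t : ℝ => 1 ≤ t)
        (fun a b ha hb => one_le_mul_of_one_le_of_one_le ha hb) le_rfl fun j _ => hr _) hl
    simp only [mul_left_comm (ENNReal.ofReal _) (∏ j, P {J j} ^ 2)]
    rw [lintegral_const_mul _ (by fun_prop), Finset.prod_mul_distrib, mul_assoc]
    gcongr
    refine hw.trans (le_of_eq ?_)
    congr 1
    rw [hd, ← ENNReal.ofReal_prod_of_nonneg]
    · congr 1
      rw [Finset.prod_mul_distrib, Real.finsetProd_rpow _ _ fun j _ => zero_le_one.trans (hr _),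
        Finset.abs_prod, Finset.prod_inv_distrib]
    · intro j _
      have := zero_le_one.trans (hr (J j))
      positivity
  calc _ ≤ ∑' k, θ ^ k * C := ENNReal.tsum_le_tsum hk
    _ = (1 - θ)⁻¹ * C := by rw [ENNReal.tsum_mul_right, ENNReal.tsum_geometric]
    _ < ∞ := by
      refine ENNReal.mul_lt_top ?_ hCfin
      rw [ENNReal.inv_lt_top]
      exact tsub_pos_of_lt hlt

end Energy

section Abstract
open scoped ENNReal
set_option linter.unusedSectionVars false

variable {E : Type*} [NormedAddCommGroup E] [InnerProductSpace ℝ E] [FiniteDimensional ℝ E]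

lemma continuous_Q (A : Fin m → E →L[ℝ] E) (k : ℕ) :
    Continuous fun x : ℕ → Fin m => Q A x k := by
  induction k with
  | zero => exact continuous_const
  | succ k ih =>
    simp only [Q]
    exact ih.mul ((continuous_of_discreteTopology (f := A)).comp (continuous_apply k))

lemma continuous_term (A : Fin m → E →L[ℝ] E) (k : ℕ) :
    Continuous fun p : (Fin m → E) × (ℕ → Fin m) => Q A p.2 k (p.1 (p.2 k)) := by
  refine ((continuous_Q A k).comp continuous_snd).clm_apply ?_
  have h : Continuous fun q : (Fin m → E) × Fin m => q.1 q.2 :=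
    continuous_prod_of_discrete_right.mpr fun i => continuous_apply i
  exact h.comp (continuous_fst.prodMk ((continuous_apply k).comp continuous_snd))

lemma isCompact_range_cod {A : Fin m → E →L[ℝ] E} {ρ : ℝ} (hρ0 : 0 ≤ ρ) (hρ1 : ρ < 1)
    (hA : ∀ i, ‖A i‖ ≤ ρ) (a : Fin m → E) : IsCompact (Set.range (cod A a)) := by
  refine isCompact_range ?_
  obtain ⟨M, hM⟩ := exists_bd a
  refine continuous_tsum (fun k => ?_) ((summable_geometric_of_lt_one hρ0 hρ1).mul_right M)
    (fun k x => norm_term_le hA hM x k)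
  exact (continuous_term A k).comp (Continuous.prodMk_right a)

variable [MeasurableSpace E] [BorelSpace E]

lemma measurable_cod {A : Fin m → E →L[ℝ] E} {ρ : ℝ} (hρ1 : ρ < 1)
    (hA : ∀ i, ‖A i‖ ≤ ρ) :
    Measurable fun p : (Fin m → E) × (ℕ → Fin m) => cod A p.1 p.2 := by
  refine measurable_of_tendsto_metrizable (f := fun n (p : (Fin m → E) × (ℕ → Fin m)) =>
    ∑ k ∈ Finset.range n, Q A p.2 k (p.1 (p.2 k))) ?_ ?_
  · intro n
    exact Finset.measurable_fun_sum _ fun k _ => (continuous_term A k).measurable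
  · rw [tendsto_pi_nhds]
    intro p
    exact (summable_cod hρ1 hA p.1 p.2).hasSum.tendsto_sum_nat

lemma measurable_concat {n : ℕ} (hn : 0 < n) :
    Measurable (concat hn : (ℕ → (Fin n → Fin m)) → (ℕ → Fin m)) := by
  refine measurable_pi_lambda _ fun k => ?_
  unfold concat
  fun_prop

lemma second_moment {A : Fin m → E →L[ℝ] E} {ρ : ℝ} (hρ1 : ρ < 1) (hA : ∀ i, ‖A i‖ ≤ ρ)
    {n : ℕ} (hn : 0 < n) (μ : Measure (ℕ → (Fin n → Fin m))) [IsProbabilityMeasure μ] (ξ : E) :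
    ∫⁻ a : Fin m → E, ENNReal.ofReal
      (G a * ‖∫ ω, Complex.exp (inner ℝ (cod A a (concat hn ω)) ξ * Complex.I) ∂μ‖ ^ 2) ≤
    ∫⁻ q, ‖∫ a : Fin m → E, (G a : ℂ) *
        Complex.exp (inner ℝ (cod A a (concat hn q.1) - cod A a (concat hn q.2)) ξ * Complex.I)‖ₑ
        ∂(μ.prod μ) := by
  set f : (Fin m → E) → (ℕ → (Fin n → Fin m)) → ℂ := fun a ω =>
    Complex.exp (inner ℝ (cod A a (concat hn ω)) ξ * Complex.I) with hf
  have hcm : Measurable fun p : (Fin m → E) × (ℕ → (Fin n → Fin m)) => cod A p.1 (concat hn p.2) :=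
    (measurable_cod hρ1 hA).comp (measurable_fst.prodMk ((measurable_concat hn).comp measurable_snd))
  have hfm : Measurable (Function.uncurry f) := by
    simp only [hf, Function.uncurry_def]
    fun_prop
  have hfn : ∀ a ω, ‖f a ω‖ = 1 := fun a ω => Complex.norm_exp_ofReal_mul_I _
  set ψ : (Fin m → E) → ℂ := fun a => ∫ ω, f a ω ∂μ with hψ
  have hψm : StronglyMeasurable ψ := hfm.stronglyMeasurable.integral_prod_right
  have hψn : ∀ a, ‖ψ a‖ ≤ 1 := fun a => by
    refine (norm_integral_le_integral_norm _).trans ?_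
    simp [hfn]
  -- the kernel
  set g : (Fin m → E) → (ℕ → (Fin n → Fin m)) × (ℕ → (Fin n → Fin m)) → ℂ := fun a q =>
    (G a : ℂ) * Complex.exp
      (inner ℝ (cod A a (concat hn q.1) - cod A a (concat hn q.2)) ξ * Complex.I) with hg
  have hGm : Measurable (G : (Fin m → E) → ℝ) := continuous_G.measurable
  have hgm : Measurable (Function.uncurry g) := by
    simp only [hg, Function.uncurry_def]
    have h1 : Measurable fun x : (Fin m → E) × ((ℕ → (Fin n → Fin m)) × (ℕ → (Fin n → Fin m))) =>
        cod A x.1 (concat hn x.2.1) :=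
      hcm.comp (measurable_fst.prodMk (measurable_fst.comp measurable_snd))
    have h2 : Measurable fun x : (Fin m → E) × ((ℕ → (Fin n → Fin m)) × (ℕ → (Fin n → Fin m))) =>
        cod A x.1 (concat hn x.2.2) :=
      hcm.comp (measurable_fst.prodMk (measurable_snd.comp measurable_snd))
    fun_prop
  have hgi : Integrable (Function.uncurry g) ((volume : Measure (Fin m → E)).prod (μ.prod μ)) := by
    have h1 : Integrable (fun z : (Fin m → E) × ((ℕ → (Fin n → Fin m)) × (ℕ → (Fin n → Fin m))) =>
        G z.1) ((volume : Measure (Fin m → E)).prod (μ.prod μ)) :=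
      (integrable_G (E := E) (ι := Fin m)).comp_fst _
    refine h1.mono hgm.aestronglyMeasurable (.of_forall fun z => ?_)
    simp [Function.uncurry, hg, Complex.norm_exp_ofReal_mul_I]
  have hsq : ∀ a, ∫ q, g a q ∂(μ.prod μ) = ((G a * ‖ψ a‖ ^ 2 : ℝ) : ℂ) := by
    intro a
    have h1 : ∀ q : (ℕ → (Fin n → Fin m)) × (ℕ → (Fin n → Fin m)),
        g a q = (G a : ℂ) * (f a q.1 * (starRingEnd ℂ) (f a q.2)) := by
      intro q
      simp only [hg, hf, ← Complex.exp_conj, ← Complex.exp_add, inner_sub_left]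
      congr 2
      simp
      ring
    simp only [h1]
    rw [integral_const_mul, integral_prod_mul (f a) (fun ω => (starRingEnd ℂ) (f a ω)),
      integral_conj]
    change (G a : ℂ) * (ψ a * (starRingEnd ℂ) (ψ a)) = _
    rw [Complex.mul_conj, Complex.normSq_eq_norm_sq]
    push_cast
    rfl
  have hIntg : Integrable (fun a => G a * ‖ψ a‖ ^ 2) := by
    refine (integrable_G (E := E) (ι := Fin m)).mono ?_ (.of_forall fun a => ?_)
    · exact (hGm.mul (hψm.measurable.norm.pow_const 2)).aestronglyMeasurable
    · rw [norm_mul]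
      refine mul_le_of_le_one_right (norm_nonneg _) ?_
      rw [Real.norm_of_nonneg (by positivity)]
      exact pow_le_one₀ (norm_nonneg _) (hψn a)
  have hnn : ∀ a, 0 ≤ G a * ‖ψ a‖ ^ 2 := fun a => mul_nonneg (G_pos a).le (by positivity)
  calc _ = ENNReal.ofReal (∫ a, G a * ‖ψ a‖ ^ 2) :=
        (ofReal_integral_eq_lintegral_ofReal hIntg (.of_forall hnn)).symm
    _ = ‖((∫ a, G a * ‖ψ a‖ ^ 2 : ℝ) : ℂ)‖ₑ := by
        rw [← ofReal_norm, Complex.norm_real, Real.norm_of_nonneg (integral_nonneg hnn)]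
    _ = ‖∫ a, ∫ q, g a q ∂(μ.prod μ)‖ₑ := by
        simp only [hsq]; rw [integral_complex_ofReal]
    _ = ‖∫ q, ∫ a, g a q ∂(volume : Measure (Fin m → E)) ∂(μ.prod μ)‖ₑ := by
        rw [integral_integral_swap hgi]
    _ ≤ _ := enorm_integral_le_lintegral_enorm _

lemma ae_interior {A : Fin m → E →L[ℝ] E} (hU : ∀ i, IsUnit (A i)) {ρ : ℝ} (hρ0 : 0 ≤ ρ)
    (hρ : ρ < 1 / 2) (hA : ∀ i, ‖A i‖ ≤ ρ) {n : ℕ} (hn : 0 < n) [Nonempty (Fin n → Fin m)]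
    (P : Measure (Fin n → Fin m)) [IsProbabilityMeasure P] {s : ℝ}
    (hs : (Module.finrank ℝ E : ℝ) < s) (r : (Fin n → Fin m) → ℝ) (hr : ∀ I, 1 ≤ r I)
    (h : ∀ I ξ, ‖ξ‖ ≤ r I * ‖star (blockS A I) ξ‖)
    (hdet : ∀ I : Fin n → Fin m, LinearMap.det (star (blockS A I) : E →L[ℝ] E).toLinearMap ≠ 0)
    (hlt : ∑ I, P {I} ^ 2 * ENNReal.ofReal
      (r I ^ s * |LinearMap.det (star (blockS A I) : E →L[ℝ] E).toLinearMap|⁻¹) < 1) :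
    ∀ᵐ a : Fin m → E, (interior (Set.range (cod A a))).Nonempty := by
  have hρ1 : ρ < 1 := by linarith
  have hs0 : 0 ≤ s := (Nat.cast_nonneg _).trans hs.le
  obtain ⟨c, hc, hbb⟩ := block_bound hU hρ hρ0 hA hn
  set μ : Measure (ℕ → (Fin n → Fin m)) := Measure.infinitePi (fun _ => P) with hμ
  have hen := energy_fin (blockS A) hc hs0 P r hr h hdet hlt
  rw [← hμ] at hen
  have hcm : Measurable fun p : (Fin m → E) × (ℕ → (Fin n → Fin m)) => cod A p.1 (concat hn p.2) :=
    (measurable_cod hρ1 hA).comp (measurable_fst.prodMk ((measurable_concat hn).comp measurable_snd))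
  set ψ : (Fin m → E) → E → ℂ := fun a ξ =>
    ∫ ω, Complex.exp (inner ℝ (cod A a (concat hn ω)) ξ * Complex.I) ∂μ with hψ
  have hψm : Measurable (Function.uncurry ψ) := by
    have h1 : Measurable fun z : ((Fin m → E) × E) × (ℕ → (Fin n → Fin m)) =>
        cod A z.1.1 (concat hn z.2) :=
      hcm.comp ((measurable_fst.comp measurable_fst).prodMk measurable_snd)
    have h2 : Measurable fun z : ((Fin m → E) × E) × (ℕ → (Fin n → Fin m)) =>
        Complex.exp (inner ℝ (cod A z.1.1 (concat hn z.2)) z.1.2 * Complex.I) := by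
      fun_prop
    exact h2.stronglyMeasurable.integral_prod_right'.measurable
  have hξ : ∀ ξ, ∫⁻ a, ENNReal.ofReal (G a * ‖ψ a ξ‖ ^ 2) ≤
      ENNReal.ofReal (Real.exp 1) * ∫⁻ q, kerB (blockS A) c ξ q ∂(μ.prod μ) := by
    intro ξ
    refine (second_moment hρ1 hA hn μ ξ).trans ?_
    rw [← lintegral_const_mul' _ _ ENNReal.ofReal_ne_top]
    refine lintegral_mono fun q => ?_
    obtain ⟨k, hk1, hk2⟩ := hbb q.1 q.2 ξ
    rw [← ofReal_norm]
    refine (ENNReal.ofReal_le_ofReal hk2).trans ?_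
    rw [ENNReal.ofReal_mul (Real.exp_pos _).le]
    gcongr
    exact le_kerB _ _ _ _ _ _ hk1
  have hGm : Measurable (G : (Fin m → E) → ℝ) := continuous_G.measurable
  have hFm : Measurable fun z : (Fin m → E) × E =>
      ENNReal.ofReal ((1 + ‖z.2‖) ^ s) * ENNReal.ofReal (G z.1 * ‖ψ z.1 z.2‖ ^ 2) := by
    have h1 : Measurable fun z : (Fin m → E) × E => ψ z.1 z.2 := hψm
    fun_prop
  have htot : ∫⁻ a, ∫⁻ ξ, ENNReal.ofReal ((1 + ‖ξ‖) ^ s) *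
      ENNReal.ofReal (G a * ‖ψ a ξ‖ ^ 2) < ∞ := by
    rw [lintegral_lintegral_swap hFm.aemeasurable]
    calc _ = ∫⁻ ξ, ENNReal.ofReal ((1 + ‖ξ‖) ^ s) * ∫⁻ a, ENNReal.ofReal (G a * ‖ψ a ξ‖ ^ 2) := by
          refine lintegral_congr fun ξ => ?_
          rw [lintegral_const_mul' _ _ ENNReal.ofReal_ne_top]
      _ ≤ ∫⁻ ξ, ENNReal.ofReal (Real.exp 1) * (ENNReal.ofReal ((1 + ‖ξ‖) ^ s) *
            ∫⁻ q, kerB (blockS A) c ξ q ∂(μ.prod μ)) := by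
          refine lintegral_mono fun ξ => ?_
          rw [mul_left_comm]
          gcongr
          exact hξ ξ
      _ < ∞ := by
          rw [lintegral_const_mul' _ _ ENNReal.ofReal_ne_top]
          exact ENNReal.mul_lt_top ENNReal.ofReal_lt_top hen
  have hae := ae_lt_top hFm.lintegral_prod_right' htot.ne
  filter_upwards [hae] with a ha
  have hXm : Measurable fun ω => cod A a (concat hn ω) := hcm.comp measurable_prodMk_left
  set ν := μ.map (fun ω => cod A a (concat hn ω)) with hν
  have : IsProbabilityMeasure ν := Measure.isProbabilityMeasure_map hXm.aemeasurable
  have hcf : ∀ ξ, charFun ν ξ = ψ a ξ := by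
    intro ξ
    rw [charFun_apply, hν, integral_map hXm.aemeasurable]
    exact (Measurable.aestronglyMeasurable (by fun_prop))
  refine interior_nonempty_of_charFun ν ?_ _ (isCompact_range_cod hρ0 hρ1 hA a) ?_
  · refine ⟨measurable_charFun.aestronglyMeasurable, ?_⟩
    rw [hasFiniteIntegral_iff_enorm]
    have hw : ∫⁻ ξ : E, ENNReal.ofReal ((1 + ‖ξ‖) ^ (-s)) < ∞ :=
      (integrable_one_add_norm hs).lintegral_lt_top
    calc ∫⁻ ξ, ‖charFun ν ξ‖ₑ ≤ ∫⁻ ξ, (ENNReal.ofReal (G a)⁻¹ * (ENNReal.ofReal ((1 + ‖ξ‖) ^ s) *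
            ENNReal.ofReal (G a * ‖ψ a ξ‖ ^ 2)) + ENNReal.ofReal ((1 + ‖ξ‖) ^ (-s))) := by
          refine lintegral_mono fun ξ => ?_
          simp only
          have hG := G_pos a
          have hp : 0 < (1 + ‖ξ‖) ^ s := by positivity
          rw [hcf, ← ofReal_norm, ← ENNReal.ofReal_mul (by positivity),
            ← ENNReal.ofReal_mul (by positivity), ← ENNReal.ofReal_add (by positivity)
              (by positivity)]
          apply ENNReal.ofReal_le_ofReal
          rw [Real.rpow_neg (by positivity)]
          set w := (1 + ‖ξ‖) ^ s
          set t := ‖ψ a ξ‖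
          have e1 : (G a)⁻¹ * (w * (G a * t ^ 2)) = w * t ^ 2 := by field_simp
          rw [e1]
          have e2 : w * t ^ 2 + w⁻¹ - 2 * t = w * (t - w⁻¹) ^ 2 := by field_simp; ring
          have e3 : 0 ≤ w * (t - w⁻¹) ^ 2 := by positivity
          have e4 : 0 ≤ t := norm_nonneg _
          linarith
      _ < ∞ := by
          rw [lintegral_add_right _ (by fun_prop), lintegral_const_mul' _ _ ENNReal.ofReal_ne_top]
          exact ENNReal.add_lt_top.mpr ⟨ENNReal.mul_lt_top ENNReal.ofReal_lt_top ha, hw⟩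
  · rw [hν, Measure.map_apply hXm
      (isCompact_range_cod hρ0 hρ1 hA a).isClosed.measurableSet.compl]
    convert! measure_empty (μ := μ)
    ext ω
    simp

end Abstract

lemma toCLM_wordProd (T : Fin m → Matrix (Fin d) (Fin d) ℝ) {n : ℕ} (I : Fin n → Fin m) :
    Matrix.toEuclideanCLM (𝕜 := ℝ) (wordProd T I)
      = blockS (fun i => Matrix.toEuclideanCLM (𝕜 := ℝ) (T i)) I := by
  rw [wordProd, blockS, map_list_prod, List.map_ofFn]
  rfl

lemma attractor_eq (T : Fin m → Matrix (Fin d) (Fin d) ℝ) (a : Fin m → EuclideanSpace ℝ (Fin d)) :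
    attractor T a = Set.range (cod (fun i => Matrix.toEuclideanCLM (𝕜 := ℝ) (T i)) a) := by
  unfold attractor
  congr 1
  funext x
  simp only [codingMap, cod, Q_eq_ofFn, toCLM_wordProd, blockS]

lemma det_star_toCLM (M : Matrix (Fin d) (Fin d) ℝ) :
    LinearMap.det (star (Matrix.toEuclideanCLM (𝕜 := ℝ) M) :
      EuclideanSpace ℝ (Fin d) →L[ℝ] EuclideanSpace ℝ (Fin d)).toLinearMap = M.det := by
  rw [← map_star]
  have : (Matrix.toEuclideanCLM (𝕜 := ℝ) (star M)).toLinearMap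
      = Matrix.toLin (EuclideanSpace.basisFun (Fin d) ℝ).toBasis
          (EuclideanSpace.basisFun (Fin d) ℝ).toBasis (star M) := by
    ext x; simp [Matrix.toEuclideanCLM]
  rw [this, LinearMap.det_toLin, Matrix.star_eq_conjTranspose, Matrix.det_conjTranspose]
  simp

lemma wordProd_det_isUnit (T : Fin m → Matrix (Fin d) (Fin d) ℝ)
    (hinv : ∀ i, IsUnit (T i).det) {n : ℕ} (I : Fin n → Fin m) : IsUnit (wordProd T I).det := by
  rw [← Matrix.isUnit_iff_isUnit_det, wordProd]
  apply List.prod_isUnit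
  intro M hM
  obtain ⟨k, rfl⟩ := (List.mem_ofFn' _ _).1 hM
  exact (Matrix.isUnit_iff_isUnit_det _).2 (hinv _)

lemma opNorm_wordProd_le (T : Fin m → Matrix (Fin d) (Fin d) ℝ)
    (hnorm : ∀ i, opNorm (T i) ≤ 1) {n : ℕ} (I : Fin n → Fin m) : opNorm (wordProd T I) ≤ 1 := by
  unfold wordProd
  have : ∀ L : List (Matrix (Fin d) (Fin d) ℝ), (∀ M ∈ L, opNorm M ≤ 1) → opNorm L.prod ≤ 1 := by
    intro L
    induction L with
    | nil =>
      intro _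
      rw [List.prod_nil, opNorm, map_one]
      exact ContinuousLinearMap.norm_id_le (𝕜 := ℝ)
    | cons M L ih =>
      intro h
      rw [List.prod_cons, opNorm, map_mul]
      refine (norm_mul_le _ _).trans ?_
      exact mul_le_one₀ (h M (by simp)) (norm_nonneg _) (ih fun N hN => h N (by simp [hN]))
  apply this
  intro M hM
  obtain ⟨k, rfl⟩ := (List.mem_ofFn' _ _).1 hM
  exact hnorm _

lemma norm_le_star (M : Matrix (Fin d) (Fin d) ℝ) (hM : IsUnit M.det)
    (ξ : EuclideanSpace ℝ (Fin d)) :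
    ‖ξ‖ ≤ opNorm M⁻¹ * ‖star (Matrix.toEuclideanCLM (𝕜 := ℝ) M) ξ‖ := by
  have h1 : star (Matrix.toEuclideanCLM (𝕜 := ℝ) M⁻¹) * star (Matrix.toEuclideanCLM (𝕜 := ℝ) M)
      = 1 := by
    rw [← star_mul, ← map_mul, Matrix.mul_nonsing_inv _ hM, map_one, star_one]
  have h2 : ξ = star (Matrix.toEuclideanCLM (𝕜 := ℝ) M⁻¹)
      (star (Matrix.toEuclideanCLM (𝕜 := ℝ) M) ξ) := by
    have := congrArg (fun L => L ξ) h1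
    exact this.symm
  have h3 : ‖star (Matrix.toEuclideanCLM (𝕜 := ℝ) M⁻¹)‖ = opNorm M⁻¹ := by
    rw [ContinuousLinearMap.star_eq_adjoint, LinearIsometryEquiv.norm_map]; rfl
  have h4 := ContinuousLinearMap.le_opNorm (star (Matrix.toEuclideanCLM (𝕜 := ℝ) M⁻¹))
    (star (Matrix.toEuclideanCLM (𝕜 := ℝ) M) ξ)
  rw [← h2, h3] at h4
  exact h4

lemma one_le_opNorm_inv [Nonempty (Fin d)] (M : Matrix (Fin d) (Fin d) ℝ) (hM : IsUnit M.det)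
    (h1 : opNorm M ≤ 1) : 1 ≤ opNorm M⁻¹ := by
  have h : (1 : ℝ) = ‖Matrix.toEuclideanCLM (𝕜 := ℝ) M * Matrix.toEuclideanCLM (𝕜 := ℝ) M⁻¹‖ := by
    rw [← map_mul, Matrix.mul_nonsing_inv _ hM, map_one, norm_one]
  rw [h]
  refine (norm_mul_le _ _).trans ?_
  exact mul_le_of_le_one_left (norm_nonneg _) h1

/-- **Theorem 1.1.** If `‖T_i‖ < 1/2` for all `i` and `t(T_1,…,T_m) > d`, then for
Lebesgue-a.e. `a ∈ ℝ^{md}` the self-affine set `K^a` has non-empty interior. -/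
theorem typical_selfAffine_nonempty_interior_of_tParam_gt
    (T : Fin m → Matrix (Fin d) (Fin d) ℝ)
    (hinv : ∀ i, IsUnit (T i).det)
    (hnorm : ∀ i, opNorm (T i) < 1 / 2)
    (ht : (d : ℝ) < tParam T) :
    ∀ᵐ a ∂(volume : Measure (Fin m → EuclideanSpace ℝ (Fin d))),
      (interior (attractor T a)).Nonempty := by
  obtain ⟨s, hds, hst⟩ := exists_between ht
  have hs0 : 0 ≤ s := (Nat.cast_nonneg d).trans hds.le
  have hns : ¬ (0 ≤ s ∧ ∀ n : ℕ, 0 < n →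
      ∑ I : Fin n → Fin m, alphaMin (wordProd T I) ^ s * |(wordProd T I).det| ≤ 1) := by
    intro hmem
    have hle : tParam T ≤ s := by
      unfold tParam
      exact csInf_le ⟨0, fun t ht => ht.1⟩ hmem
    linarith
  push Not at hns
  obtain ⟨n, hn, hZ⟩ := hns hs0
  set φ : (Fin n → Fin m) → ℝ := fun I => alphaMin (wordProd T I) ^ s * |(wordProd T I).det| with hφ
  set Z : ℝ := ∑ I, φ I with hZdef
  have hZ1 : 1 < Z := hZ
  have hne : Nonempty (Fin n → Fin m) := by
    by_contra hcon
    rw [not_nonempty_iff] at hcon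
    rw [hZdef, Finset.univ_eq_empty, Finset.sum_empty] at hZ1
    linarith
  have hmne : Nonempty (Fin m) := ⟨hne.some ⟨0, hn⟩⟩
  rcases Nat.eq_zero_or_pos d with hd | hd
  · subst hd
    refine Filter.Eventually.of_forall fun a => ?_
    have : attractor T a = Set.univ := by
      refine Set.eq_univ_of_forall fun y => ⟨fun _ => hmne.some, Subsingleton.elim _ _⟩
    rw [this, interior_univ]
    exact Set.univ_nonempty
  have : Nonempty (Fin d) := ⟨⟨0, hd⟩⟩
  set A : Fin m → EuclideanSpace ℝ (Fin d) →L[ℝ] EuclideanSpace ℝ (Fin d) :=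
    fun i => Matrix.toEuclideanCLM (𝕜 := ℝ) (T i) with hA
  obtain ⟨i0, hi0⟩ := Finite.exists_max fun i => opNorm (T i)
  have hU : ∀ i, IsUnit (A i) := fun i =>
    ((Matrix.isUnit_iff_isUnit_det _).2 (hinv i)).map (Matrix.toEuclideanCLM (𝕜 := ℝ) (n := Fin d))
  have hdu : ∀ I : Fin n → Fin m, IsUnit (wordProd T I).det := wordProd_det_isUnit T hinv
  have hr : ∀ I : Fin n → Fin m, 1 ≤ opNorm (wordProd T I)⁻¹ := fun I =>
    one_le_opNorm_inv _ (hdu I)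
      (opNorm_wordProd_le T (fun i => (hnorm i).le.trans (by norm_num)) I)
  have hφpos : ∀ I, 0 < φ I := fun I =>
    mul_pos (Real.rpow_pos_of_pos (inv_pos.2 (lt_of_lt_of_le one_pos (hr I))) _)
      (abs_pos.2 (hdu I).ne_zero)
  have hZ0 : 0 < Z := one_pos.trans hZ1
  have hsum : ∑ I, ENNReal.ofReal (φ I / Z) = 1 := by
    rw [← ENNReal.ofReal_sum_of_nonneg (fun I _ => (div_pos (hφpos I) hZ0).le), ← Finset.sum_div,
      ← hZdef, div_self hZ0.ne', ENNReal.ofReal_one]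
  set P : Measure (Fin n → Fin m) :=
    (PMF.ofFintype (fun I => ENNReal.ofReal (φ I / Z)) hsum).toMeasure with hP
  have hPI : ∀ I, P {I} = ENNReal.ofReal (φ I / Z) := fun I => by
    rw [hP, PMF.toMeasure_apply_singleton _ _ (measurableSet_singleton I)]
    rfl
  have key := ae_interior (A := A) hU (norm_nonneg _ : 0 ≤ opNorm (T i0)) (hnorm i0) hi0 hn P
    (s := s) (by rw [finrank_euclideanSpace_fin]; exact hds)
    (fun I => opNorm (wordProd T I)⁻¹) hr
    (fun I ξ => by
      rw [hA, ← toCLM_wordProd]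
      exact norm_le_star _ (hdu I) ξ)
    (fun I => by
      rw [hA, ← toCLM_wordProd, det_star_toCLM]
      exact (hdu I).ne_zero)
    (by
      have hterm : ∀ I : Fin n → Fin m, P {I} ^ 2 * ENNReal.ofReal
          (opNorm (wordProd T I)⁻¹ ^ s * |LinearMap.det (star (blockS A I) :
            EuclideanSpace ℝ (Fin d) →L[ℝ] EuclideanSpace ℝ (Fin d)).toLinearMap|⁻¹)
          = ENNReal.ofReal (φ I / Z ^ 2) := by
        intro I
        rw [hA, ← toCLM_wordProd, det_star_toCLM, hPI,
          ← ENNReal.ofReal_pow (div_pos (hφpos I) hZ0).le,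
          ← ENNReal.ofReal_mul (by positivity)]
        congr 1
        have h1 : opNorm (wordProd T I)⁻¹ ^ s * |(wordProd T I).det|⁻¹ = (φ I)⁻¹ := by
          simp only [hφ, alphaMin]
          rw [Real.inv_rpow (zero_le_one.trans (hr I)), mul_inv, inv_inv]
        rw [h1]
        have := (hφpos I).ne'
        field_simp
      rw [Finset.sum_congr rfl fun I _ => hterm I,
        ← ENNReal.ofReal_sum_of_nonneg (fun I _ => (div_pos (hφpos I) (pow_pos hZ0 2)).le),
        ← Finset.sum_div, ← hZdef, ENNReal.ofReal_lt_one, div_lt_one (by positivity)]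
      nlinarith)
  filter_upwards [key] with a ha
  rw [attractor_eq]
  exact ha

end SelfAffine
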